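/- arXiv:2105.06094 — 2 statements merged into one kernel-verified Lean document; each statement's English description precedes it below -/
import Mathlib

section
/- Fix α > 0. A function φ : [0,∞) → [-∞,∞] makes FDPD_{φ,α} a valid divergence on Lebesgue probability densities in L_{μ,α} if and only if ψ(x) := φ(e^x) is convex and strictly increasing on [-∞, ∞) with ψ(ℝ) ⊆ ℝ. -/
open MeasureTheory ENNReal Set

/-- A probability density in `L_{μ,α}`: nonnegative (being `ℝ≥0∞`-valued), measurable,
integrating to `1`, with finite `(1+α)`-th power integral. -/
def IsDensity (μ : Measure ℝ) (α : ℝ) (f : ℝ → ℝ≥0∞) : Prop :=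
  Measurable f ∧ ∫⁻ x, f x ∂μ = 1 ∧ ∫⁻ x, f x ^ (1 + α) ∂μ < ⊤

/-- The functional density power divergence
`FDPD_{φ,α}(g,f) = φ(∫ f^{α+1}) − (1+1/α) φ(∫ f^α g) + (1/α) φ(∫ g^{α+1})`. -/
noncomputable def FDPD (φ : ℝ≥0∞ → EReal) (α : ℝ) (μ : Measure ℝ)
    (g f : ℝ → ℝ≥0∞) : EReal :=
  φ (∫⁻ x, f x ^ (α + 1) ∂μ)
    - ((1 + 1 / α : ℝ) : EReal) * φ (∫⁻ x, f x ^ α * g x ∂μ)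
    + ((1 / α : ℝ) : EReal) * φ (∫⁻ x, g x ^ (α + 1) ∂μ)

/-- `ψ` is convex on `[-∞,∞)` (in the extended-real sense). -/
def ERealConvexOn (ψ : EReal → EReal) : Prop :=
  ∀ x : EReal, x < ⊤ → ∀ y : EReal, y < ⊤ → ∀ t : ℝ, 0 < t → t < 1 →
    ψ ((t : EReal) * x + ((1 - t : ℝ) : EReal) * y) ≤
      (t : EReal) * ψ x + ((1 - t : ℝ) : EReal) * ψ y

/-- `FDPD_{φ,α}` is a valid divergence on densities in `L_{μ,α}`: it is nonnegative, and
vanishes exactly when the two densities agree `μ`-a.e. -/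
def IsValidDivergence (φ : ℝ≥0∞ → EReal) (α : ℝ) (μ : Measure ℝ) : Prop :=
  ∀ f g : ℝ → ℝ≥0∞, IsDensity μ α f → IsDensity μ α g →
    0 ≤ FDPD φ α μ g f ∧ (FDPD φ α μ g f = 0 ↔ f =ᵐ[μ] g)

/-!
Put `w = α / (α + 1)`, `A = ∫ f ^ (α + 1)`, `B = ∫ g ^ (α + 1)` and `C = ∫ f ^ α * g`. Then
`FDPD φ α μ g f = (1 + 1 / α) * (w * φ A + (1 - w) * φ B - φ C)`, and Hölder's inequality gives
`C ≤ A ^ w * B ^ (1 - w)`, with equality exactly when `f = g` a.e. On the logarithmic scale this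
upper bound for `C` is the `w`-mean of `A` and `B`, so strict monotonicity and Jensen's inequality
make the divergence valid. Conversely, step functions realize all finite positive `A`, `B` together
with every `C` strictly below the Hölder bound, so a valid divergence forces
`ψ c < w * ψ a + (1 - w) * ψ b` for every `c` strictly below `w * a + (1 - w) * b`. Taking `a = b`
gives strict monotonicity; the weights for which the (non-strict) inequality holds are closed and
stable under `w`-means, hence fill `[0, 1]`, and `ψ` is convex.
-/

section Convexity

/-- The weights `t` for which the convexity inequality for `ψ` holds at every point strictly below
the weighted mean `t * a + (1 - t) * b`; staying strictly below makes this set closed without any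
continuity of `ψ`. -/
def subconvexWeights (ψ : ℝ → ℝ) : Set ℝ :=
  {t | ∀ a b c, c < t * a + (1 - t) * b → ψ c ≤ t * ψ a + (1 - t) * ψ b}

lemma isClosed_subconvexWeights (ψ : ℝ → ℝ) : IsClosed (subconvexWeights ψ) := by
  simp only [subconvexWeights, ofPred_forall]
  refine isClosed_iInter fun a => isClosed_iInter fun b => isClosed_iInter fun c => ?_
  exact isClosed_imp (isOpen_lt (by fun_prop) (by fun_prop))
    (isClosed_le (by fun_prop) (by fun_prop))

variable {ψ : ℝ → ℝ} {w : ℝ}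

lemma one_mem_subconvexWeights (hψ : Monotone ψ) : 1 ∈ subconvexWeights ψ := fun a b c hc => by
  simpa using hψ (show c ≤ a by simpa using hc.le)

lemma zero_mem_subconvexWeights (hψ : Monotone ψ) : 0 ∈ subconvexWeights ψ := fun a b c hc => by
  simpa using hψ (show c ≤ b by simpa using hc.le)

lemma monotone_of_mem_subconvexWeights (hw : w ∈ subconvexWeights ψ) : Monotone ψ :=
  monotone_iff_forall_lt.2 fun c a hc => by
    have := hw a a c (by linarith)
    linarith

lemma add_mem_subconvexWeights (hw0 : 0 ≤ w) (hw1 : w ≤ 1) (hw : w ∈ subconvexWeights ψ)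
    {s t : ℝ} (hs : s ∈ subconvexWeights ψ) (ht : t ∈ subconvexWeights ψ) :
    w * s + (1 - w) * t ∈ subconvexWeights ψ := by
  intro a b c hc
  obtain ⟨ε, hε, hcε⟩ : ∃ ε > 0,
      c < w * (s * a + (1 - s) * b - ε) + (1 - w) * (t * a + (1 - t) * b - ε) :=
    ⟨((w * s + (1 - w) * t) * a + (1 - (w * s + (1 - w) * t)) * b - c) / 2, by linarith,
      by linarith⟩
  have hleft : ψ (s * a + (1 - s) * b - ε) ≤ s * ψ a + (1 - s) * ψ b := hs a b _ (by linarith)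
  have hright : ψ (t * a + (1 - t) * b - ε) ≤ t * ψ a + (1 - t) * ψ b := ht a b _ (by linarith)
  calc ψ c ≤ w * ψ (s * a + (1 - s) * b - ε) + (1 - w) * ψ (t * a + (1 - t) * b - ε) :=
        hw _ _ c hcε
    _ ≤ w * (s * ψ a + (1 - s) * ψ b) + (1 - w) * (t * ψ a + (1 - t) * ψ b) := by
        have : 0 ≤ 1 - w := by linarith
        gcongr
    _ = (w * s + (1 - w) * t) * ψ a + (1 - (w * s + (1 - w) * t)) * ψ b := by ring

lemma ordConnected_of_isClosed_of_add_mem {S : Set ℝ} (hS : IsClosed S) (hw0 : 0 < w)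
    (hw1 : w < 1) (hadd : ∀ s ∈ S, ∀ t ∈ S, w * s + (1 - w) * t ∈ S) : S.OrdConnected := by
  refine ⟨fun s hs t ht z hz => ?_⟩
  by_contra hzS
  obtain ⟨l, ⟨hlS, hl⟩, hlmax⟩ := (isCompact_Icc.inter_left hS).exists_isGreatest
    (⟨s, hs, left_mem_Icc.2 hz.1⟩ : (S ∩ Icc s z).Nonempty)
  obtain ⟨u, ⟨huS, hu⟩, humin⟩ := (isCompact_Icc.inter_left hS).exists_isLeast
    (⟨t, ht, right_mem_Icc.2 hz.2⟩ : (S ∩ Icc z t).Nonempty)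
  have hlz : l < z := hl.2.lt_of_ne fun h => hzS (h ▸ hlS)
  have hzu : z < u := hu.1.lt_of_ne fun h => hzS (h ▸ huS)
  have hlm : l < w * l + (1 - w) * u := by nlinarith
  have hmu : w * l + (1 - w) * u < u := by nlinarith
  rcases le_total (w * l + (1 - w) * u) z with hm | hm
  · exact hlm.not_ge (hlmax ⟨hadd l hlS u huS, by linarith [hl.1], hm⟩)
  · exact hmu.not_ge (humin ⟨hadd l hlS u huS, hm, by linarith [hu.2]⟩)

lemma Icc_subset_subconvexWeights (hw0 : 0 < w) (hw1 : w < 1) (hw : w ∈ subconvexWeights ψ) :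
    Icc 0 1 ⊆ subconvexWeights ψ :=
  have hψ := monotone_of_mem_subconvexWeights hw
  (ordConnected_of_isClosed_of_add_mem (isClosed_subconvexWeights ψ) hw0 hw1 fun _ hs _ ht =>
    add_mem_subconvexWeights hw0.le hw1.le hw hs ht).out
    (zero_mem_subconvexWeights hψ) (one_mem_subconvexWeights hψ)

lemma convexOn_of_mem_subconvexWeights (hw0 : 0 < w) (hw1 : w < 1)
    (hw : w ∈ subconvexWeights ψ) : ConvexOn ℝ univ ψ := by
  refine LinearOrder.convexOn_of_lt convex_univ fun x _ y _ hxy t s ht hs hts => ?_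
  obtain rfl : s = 1 - t := by linarith
  simp only [smul_eq_mul]
  -- Decreasing the weight of the smaller point `x` moves the mean strictly up.
  have hbelow : ∀ᶠ r in nhdsWithin t (Iio t),
      ψ (t * x + (1 - t) * y) ≤ r * ψ x + (1 - r) * ψ y := by
    filter_upwards [Ioo_mem_nhdsLT ht] with r hr
    refine Icc_subset_subconvexWeights hw0 hw1 hw ⟨hr.1.le, by linarith [hr.2]⟩ x y _ ?_
    nlinarith [hr.2]
  refine ge_of_tendsto (Filter.Tendsto.mono_left ?_ nhdsWithin_le_nhds) hbelow
  exact Continuous.tendsto (by fun_prop) t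

end Convexity

section Holder

variable {X : Type*} [MeasurableSpace X] {μ : Measure X} {p q : ℝ}

lemma rpow_mul_rpow_le_weighted_add (x y : ℝ≥0∞) (hp : 0 < p) (hq : 0 < q) (hpq : p + q = 1) :
    x ^ p * y ^ q ≤ ENNReal.ofReal p * x + ENNReal.ofReal q * y := by
  have hconj : (p⁻¹).HolderConjugate q⁻¹ := by constructor <;> simp [*]
  simpa only [ENNReal.rpow_rpow_inv hp.ne', ENNReal.rpow_rpow_inv hq.ne',
    ENNReal.ofReal_inv_of_pos hp, ENNReal.ofReal_inv_of_pos hq, div_eq_mul_inv, inv_inv,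
    mul_comm _ (ENNReal.ofReal _)] using ENNReal.young_inequality (x ^ p) (y ^ q) hconj

lemma eq_of_rpow_mul_rpow_eq_weighted_add {x y : ℝ≥0∞} (hx : x ≠ ⊤) (hy : y ≠ ⊤) (hp : 0 < p)
    (hq : 0 < q) (hpq : p + q = 1)
    (h : x ^ p * y ^ q = ENNReal.ofReal p * x + ENNReal.ofReal q * y) : x = y := by
  have hconj : (p⁻¹).HolderConjugate q⁻¹ := by constructor <;> simp [*]
  have hyoung := (ENNReal.young_inequality_eq_iff (x ^ p) (y ^ q) hconj).1
  simp only [ENNReal.rpow_rpow_inv hp.ne', ENNReal.rpow_rpow_inv hq.ne',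
    ENNReal.ofReal_inv_of_pos hp, ENNReal.ofReal_inv_of_pos hq, div_eq_mul_inv, inv_inv,
    mul_comm _ (ENNReal.ofReal _)] at hyoung
  rcases hyoung h with ⟨htop, -⟩ | ⟨-, htop⟩ | heq
  · exact absurd htop (ENNReal.rpow_ne_top_of_nonneg hp.le hx)
  · exact absurd htop (ENNReal.rpow_ne_top_of_nonneg hq.le hy)
  · exact heq

lemma ae_eq_of_lintegral_rpow_mul_rpow_eq_one {u v : X → ℝ≥0∞} (hu : AEMeasurable u μ)
    (hv : AEMeasurable v μ) (hu1 : ∫⁻ x, u x ∂μ = 1) (hv1 : ∫⁻ x, v x ∂μ = 1)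
    (hp : 0 < p) (hq : 0 < q) (hpq : p + q = 1) (h : ∫⁻ x, u x ^ p * v x ^ q ∂μ = 1) :
    u =ᵐ[μ] v := by
  have hmean : ∫⁻ x, ENNReal.ofReal p * u x + ENNReal.ofReal q * v x ∂μ = 1 := by
    rw [lintegral_add_left' (hu.const_mul _), lintegral_const_mul'' _ hu,
      lintegral_const_mul'' _ hv, hu1, hv1, mul_one, mul_one, ← ENNReal.ofReal_add hp.le hq.le,
      hpq, ENNReal.ofReal_one]
  have heq := ae_eq_of_ae_le_of_lintegral_le
    (.of_forall fun x => rpow_mul_rpow_le_weighted_add (u x) (v x) hp hq hpq)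
    (by simp [h]) (by fun_prop) (hmean.trans h.symm).le
  filter_upwards [heq, ae_lt_top' hu (by simp [hu1]), ae_lt_top' hv (by simp [hv1])]
    with x hx hux hvx
  exact eq_of_rpow_mul_rpow_eq_weighted_add hux.ne hvx.ne hp hq hpq hx

lemma ae_mul_inv_eq_of_lintegral_rpow_mul_rpow_eq {u v : X → ℝ≥0∞} {A B : ℝ≥0∞}
    (hu : AEMeasurable u μ) (hv : AEMeasurable v μ) (hA : ∫⁻ x, u x ∂μ = A)
    (hB : ∫⁻ x, v x ∂μ = B) (hA0 : A ≠ 0) (hAt : A ≠ ⊤) (hB0 : B ≠ 0) (hBt : B ≠ ⊤)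
    (hp : 0 < p) (hq : 0 < q) (hpq : p + q = 1)
    (h : ∫⁻ x, u x ^ p * v x ^ q ∂μ = A ^ p * B ^ q) :
    (fun x => u x * A⁻¹) =ᵐ[μ] fun x => v x * B⁻¹ := by
  refine ae_eq_of_lintegral_rpow_mul_rpow_eq_one (hu.mul_const _) (hv.mul_const _) ?_ ?_ hp hq hpq
    ?_
  · rw [lintegral_mul_const'' _ hu, hA, ENNReal.mul_inv_cancel hA0 hAt]
  · rw [lintegral_mul_const'' _ hv, hB, ENNReal.mul_inv_cancel hB0 hBt]
  · have hpoint : ∀ x, (u x * A⁻¹) ^ p * (v x * B⁻¹) ^ q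
        = u x ^ p * v x ^ q * ((A ^ p)⁻¹ * (B ^ q)⁻¹) := fun x => by
      rw [ENNReal.mul_rpow_of_nonneg _ _ hp.le, ENNReal.mul_rpow_of_nonneg _ _ hq.le,
        ENNReal.inv_rpow, ENNReal.inv_rpow, mul_mul_mul_comm]
    simp_rw [hpoint]
    rw [lintegral_mul_const'' _ (by fun_prop), h, mul_mul_mul_comm,
      ENNReal.mul_inv_cancel (by simp [hA0, hAt]) (ENNReal.rpow_ne_top_of_nonneg hp.le hAt),
      ENNReal.mul_inv_cancel (by simp [hB0, hBt]) (ENNReal.rpow_ne_top_of_nonneg hq.le hBt),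
      one_mul]

lemma ae_eq_of_rpow_ae_eq_const_mul_rpow {f g : X → ℝ≥0∞} {r : ℝ} {K : ℝ≥0∞} (hr : 0 < r)
    (hg : AEMeasurable g μ) (hf1 : ∫⁻ x, f x ∂μ = 1) (hg1 : ∫⁻ x, g x ∂μ = 1)
    (h : (fun x => f x ^ r) =ᵐ[μ] fun x => K * g x ^ r) : f =ᵐ[μ] g := by
  have hscale : f =ᵐ[μ] fun x => K ^ r⁻¹ * g x := by
    filter_upwards [h] with x hx
    rw [← ENNReal.rpow_rpow_inv hr.ne' (f x), hx,
      ENNReal.mul_rpow_of_nonneg _ _ (inv_nonneg.2 hr.le), ENNReal.rpow_rpow_inv hr.ne']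
  have hK : K ^ r⁻¹ = 1 := by
    rwa [lintegral_congr_ae hscale, lintegral_const_mul'' _ hg, hg1, mul_one] at hf1
  simpa only [hK, one_mul] using hscale

end Holder

/-- The weight `α / (α + 1)` of `f` in Hölder's inequality for `∫ f ^ α * g`; that of `g` is
`1 - holderWeight α = 1 / (α + 1)`. -/
noncomputable def holderWeight (α : ℝ) : ℝ := α / (α + 1)

section HolderWeight

variable {α : ℝ}

lemma holderWeight_pos (hα : 0 < α) : 0 < holderWeight α := by
  unfold holderWeight; positivity

lemma add_one_mul_holderWeight (hα : 0 < α) : (α + 1) * holderWeight α = α := by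
  unfold holderWeight; field_simp

lemma add_one_mul_one_sub_holderWeight (hα : 0 < α) : (α + 1) * (1 - holderWeight α) = 1 := by
  linarith [add_one_mul_holderWeight hα]

lemma one_sub_holderWeight_pos (hα : 0 < α) : 0 < 1 - holderWeight α :=
  pos_of_mul_pos_right (by rw [add_one_mul_one_sub_holderWeight hα]; exact one_pos) (by positivity)

end HolderWeight

lemma exp_rpow_mul_exp_rpow (a b s t : ℝ) :
    EReal.exp a ^ s * EReal.exp b ^ t = EReal.exp ((s * a + t * b : ℝ) : EReal) := by
  rw [← EReal.exp_mul, ← EReal.exp_mul, ← EReal.exp_add]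
  norm_cast
  rw [mul_comm a, mul_comm b]

section Divergence

variable {μ : Measure ℝ} {α : ℝ} {f g : ℝ → ℝ≥0∞}

namespace IsDensity

lemma lintegral_rpow_ne_zero (hα : 0 < α) (hf : IsDensity μ α f) :
    ∫⁻ x, f x ^ (α + 1) ∂μ ≠ 0 := fun h => by
  have hzero := ENNReal.ae_eq_zero_of_lintegral_rpow_eq_zero (by positivity) hf.1.aemeasurable h
  have hone := hf.2.1
  simp [lintegral_congr_ae hzero] at hone

lemma lintegral_rpow_ne_top (hf : IsDensity μ α f) : ∫⁻ x, f x ^ (α + 1) ∂μ ≠ ⊤ := by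
  simpa only [add_comm] using hf.2.2.ne

lemma exists_lintegral_rpow_eq_exp (hα : 0 < α) (hf : IsDensity μ α f) :
    ∃ a : ℝ, ∫⁻ x, f x ^ (α + 1) ∂μ = EReal.exp (a : EReal) :=
  ⟨_, by rw [← ENNReal.log_pos_real (hf.lintegral_rpow_ne_zero hα) hf.lintegral_rpow_ne_top,
    ENNReal.exp_log]⟩

end IsDensity

lemma lintegral_rpow_mul_eq_lintegral_rpow_rpow_mul (hα : 0 < α) (f g : ℝ → ℝ≥0∞) :
    ∫⁻ x, f x ^ α * g x ∂μ
      = ∫⁻ x, (f x ^ (α + 1)) ^ holderWeight α * (g x ^ (α + 1)) ^ (1 - holderWeight α) ∂μ := by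
  simp only [← ENNReal.rpow_mul, add_one_mul_holderWeight hα, add_one_mul_one_sub_holderWeight hα,
    ENNReal.rpow_one]

lemma lintegral_rpow_mul_of_ae_eq (hα : 0 ≤ α) (h : f =ᵐ[μ] g) :
    ∫⁻ x, f x ^ α * g x ∂μ = ∫⁻ x, f x ^ (α + 1) ∂μ :=
  lintegral_congr_ae <| by
    filter_upwards [h] with x hx
    rw [← hx, ENNReal.rpow_add_of_nonneg _ _ hα zero_le_one, ENNReal.rpow_one]

lemma lintegral_rpow_congr_ae (h : f =ᵐ[μ] g) (r : ℝ) :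
    ∫⁻ x, f x ^ r ∂μ = ∫⁻ x, g x ^ r ∂μ :=
  lintegral_congr_ae (h.fun_comp (· ^ r))

namespace IsDensity

lemma lintegral_rpow_mul_le (hα : 0 < α) (hf : IsDensity μ α f) (hg : IsDensity μ α g) :
    ∫⁻ x, f x ^ α * g x ∂μ ≤ (∫⁻ x, f x ^ (α + 1) ∂μ) ^ holderWeight α
      * (∫⁻ x, g x ^ (α + 1) ∂μ) ^ (1 - holderWeight α) := by
  rw [lintegral_rpow_mul_eq_lintegral_rpow_rpow_mul hα]
  exact ENNReal.lintegral_mul_norm_pow_le (hf.1.pow_const _).aemeasurable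
    (hg.1.pow_const _).aemeasurable (holderWeight_pos hα).le (one_sub_holderWeight_pos hα).le
    (add_sub_cancel _ _)

lemma lintegral_rpow_mul_eq_iff (hα : 0 < α) (hf : IsDensity μ α f) (hg : IsDensity μ α g) :
    ∫⁻ x, f x ^ α * g x ∂μ = (∫⁻ x, f x ^ (α + 1) ∂μ) ^ holderWeight α
      * (∫⁻ x, g x ^ (α + 1) ∂μ) ^ (1 - holderWeight α) ↔ f =ᵐ[μ] g := by
  refine ⟨fun h => ?_, fun h => ?_⟩
  · rw [lintegral_rpow_mul_eq_lintegral_rpow_rpow_mul hα] at h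
    have hprop := ae_mul_inv_eq_of_lintegral_rpow_mul_rpow_eq (hf.1.pow_const _).aemeasurable
      (hg.1.pow_const _).aemeasurable rfl rfl (hf.lintegral_rpow_ne_zero hα)
      hf.lintegral_rpow_ne_top (hg.lintegral_rpow_ne_zero hα) hg.lintegral_rpow_ne_top
      (holderWeight_pos hα) (one_sub_holderWeight_pos hα) (add_sub_cancel _ _) h
    refine ae_eq_of_rpow_ae_eq_const_mul_rpow (r := α + 1) (by positivity) hg.1.aemeasurable
      hf.2.1 hg.2.1
      (K := (∫⁻ x, f x ^ (α + 1) ∂μ) * (∫⁻ x, g x ^ (α + 1) ∂μ)⁻¹) ?_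
    filter_upwards [hprop] with x hx
    rw [mul_assoc, mul_comm _ (g x ^ (α + 1)), ← hx, mul_left_comm,
      ENNReal.mul_inv_cancel (hf.lintegral_rpow_ne_zero hα) hf.lintegral_rpow_ne_top, mul_one]
  · rw [lintegral_rpow_mul_of_ae_eq hα.le h, ← lintegral_rpow_congr_ae h,
      ← ENNReal.rpow_add_of_nonneg _ _ (holderWeight_pos hα).le (one_sub_holderWeight_pos hα).le,
      add_sub_cancel, ENNReal.rpow_one]

end IsDensity

namespace FDPD

variable {φ : ℝ≥0∞ → EReal} {p r : ℝ}

lemma eq_mul_sub (hα : 0 < α) (hp : φ (∫⁻ x, f x ^ (α + 1) ∂μ) = p)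
    (hr : φ (∫⁻ x, g x ^ (α + 1) ∂μ) = r) :
    FDPD φ α μ g f = ((1 + 1 / α : ℝ) : EReal) *
      (((holderWeight α * p + (1 - holderWeight α) * r : ℝ) : EReal)
        - φ (∫⁻ x, f x ^ α * g x ∂μ)) := by
  have hpos : 0 < 1 + 1 / α := by positivity
  rw [FDPD, hp, hr]
  induction φ (∫⁻ x, f x ^ α * g x ∂μ) with
  | bot =>
    rw [EReal.coe_mul_bot_of_pos hpos, EReal.sub_bot (EReal.coe_ne_bot _), ← EReal.coe_mul,
      EReal.top_add_coe, EReal.sub_bot (EReal.coe_ne_bot _), EReal.coe_mul_top_of_pos hpos]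
  | top =>
    rw [EReal.coe_mul_top_of_pos hpos, EReal.sub_top, EReal.bot_add, EReal.sub_top,
      EReal.coe_mul_bot_of_pos hpos]
  | coe x =>
    norm_cast
    unfold holderWeight
    field_simp
    ring

lemma nonneg_iff (hα : 0 < α) (hp : φ (∫⁻ x, f x ^ (α + 1) ∂μ) = p)
    (hr : φ (∫⁻ x, g x ^ (α + 1) ∂μ) = r) :
    0 ≤ FDPD φ α μ g f ↔ φ (∫⁻ x, f x ^ α * g x ∂μ)
      ≤ ((holderWeight α * p + (1 - holderWeight α) * r : ℝ) : EReal) := by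
  have hpos : (0 : EReal) < ((1 + 1 / α : ℝ) : EReal) := by
    exact_mod_cast (by positivity : (0 : ℝ) < 1 + 1 / α)
  rw [eq_mul_sub hα hp hr, EReal.mul_nonneg_iff,
    EReal.sub_nonneg (.inl (EReal.coe_ne_top _)) (.inl (EReal.coe_ne_bot _))]
  simp only [hpos.le, hpos.not_ge, true_and, false_and, or_false]

lemma eq_zero_iff (hα : 0 < α) (hp : φ (∫⁻ x, f x ^ (α + 1) ∂μ) = p)
    (hr : φ (∫⁻ x, g x ^ (α + 1) ∂μ) = r) :
    FDPD φ α μ g f = 0 ↔ φ (∫⁻ x, f x ^ α * g x ∂μ)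
      = ((holderWeight α * p + (1 - holderWeight α) * r : ℝ) : EReal) := by
  have hpos : ((1 + 1 / α : ℝ) : EReal) ≠ 0 := by
    exact_mod_cast (by positivity : (1 + 1 / α : ℝ) ≠ 0)
  rw [eq_mul_sub hα hp hr, mul_eq_zero, or_iff_right hpos]
  induction φ (∫⁻ x, f x ^ α * g x ∂μ) with
  | bot => simp [-EReal.coe_add]
  | top => simp [-EReal.coe_add]
  | coe x => norm_cast; rw [sub_eq_zero, eq_comm]

end FDPD

theorem isValidDivergence_of_strictMonoOn_of_convexOn {φ : ℝ≥0∞ → EReal} (hα : 0 < α)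
    (hmono : StrictMonoOn (fun x => φ (EReal.exp x)) (Iio (⊤ : EReal)))
    (hconv : ERealConvexOn fun x => φ (EReal.exp x))
    (hfin : ∀ x : ℝ, φ (EReal.exp (x : EReal)) ≠ ⊤ ∧ φ (EReal.exp (x : EReal)) ≠ ⊥) :
    IsValidDivergence φ α μ := by
  intro f g hf hg
  obtain ⟨a, ha⟩ := hf.exists_lintegral_rpow_eq_exp hα
  obtain ⟨b, hb⟩ := hg.exists_lintegral_rpow_eq_exp hα
  obtain ⟨c, hc⟩ : ∃ c : EReal, ∫⁻ x, f x ^ α * g x ∂μ = EReal.exp c :=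
    ⟨_, (ENNReal.exp_log _).symm⟩
  set m : ℝ := holderWeight α * a + (1 - holderWeight α) * b with hm
  have holder : c ≤ m := by
    have := hf.lintegral_rpow_mul_le hα hg
    rwa [ha, hb, hc, exp_rpow_mul_exp_rpow, EReal.exp_le_exp_iff] at this
  have holder_eq : c = m ↔ f =ᵐ[μ] g := by
    rw [← hf.lintegral_rpow_mul_eq_iff hα hg, ha, hb, hc, exp_rpow_mul_exp_rpow,
      EReal.exp_strictMono.injective.eq_iff]
  have hψcm := hmono.le_iff_le (holder.trans_lt (EReal.coe_lt_top m)) (EReal.coe_lt_top m)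
  have hψmc := hmono.le_iff_le (EReal.coe_lt_top m) (holder.trans_lt (EReal.coe_lt_top m))
  obtain ⟨p, hp⟩ : ∃ p : ℝ, p = φ (EReal.exp a) := CanLift.prf _ (hfin a)
  obtain ⟨r, hr⟩ : ∃ r : ℝ, r = φ (EReal.exp b) := CanLift.prf _ (hfin b)
  have jensen :
      φ (EReal.exp m) ≤ ((holderWeight α * p + (1 - holderWeight α) * r : ℝ) : EReal) := by
    have := hconv a (EReal.coe_lt_top a) b (EReal.coe_lt_top b) _ (holderWeight_pos hα)
      (sub_pos.1 (one_sub_holderWeight_pos hα))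
    simpa only [← hp, ← hr, hm, EReal.coe_add, EReal.coe_mul] using this
  rw [FDPD.nonneg_iff hα (ha ▸ hp.symm) (hb ▸ hr.symm),
    FDPD.eq_zero_iff hα (ha ▸ hp.symm) (hb ▸ hr.symm), hc]
  refine ⟨(hψcm.2 holder).trans jensen, fun h => ?_, fun h => ?_⟩
  · exact holder_eq.1 (holder.antisymm (hψmc.1 (h ▸ jensen)))
  · have hcross : EReal.exp c = EReal.exp a := by
      rw [← hc, ← ha, lintegral_rpow_mul_of_ae_eq hα.le h]
    have hpr : r = p := by
      rw [← EReal.coe_eq_coe_iff, hp, hr, ← ha, ← hb, lintegral_rpow_congr_ae h]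
    rw [hcross, ← hp, hpr, ← add_mul, add_sub_cancel, one_mul]

end Divergence

lemma le_weighted_add_of_le {u v : EReal} {s t : ℝ} (hs : 0 ≤ s) (ht : 0 ≤ t) (hst : s + t = 1)
    (huv : u ≤ v) : u ≤ (s : EReal) * u + (t : EReal) * v := by
  have hs' : (0 : EReal) ≤ s := by exact_mod_cast hs
  have ht' : (0 : EReal) ≤ t := by exact_mod_cast ht
  calc u = (s : EReal) * u + (t : EReal) * u := by
        rw [← EReal.right_distrib_of_nonneg hs' ht', ← EReal.coe_add, hst, EReal.coe_one, one_mul]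
    _ ≤ (s : EReal) * u + (t : EReal) * v := by gcongr

lemma ERealConvexOn.of_convexOn {Ψ : EReal → EReal} {ψ : ℝ → ℝ}
    (hmono : MonotoneOn Ψ (Iio ⊤)) (hψ : ∀ x : ℝ, ψ x = Ψ x) (hconv : ConvexOn ℝ univ ψ) :
    ERealConvexOn Ψ := by
  intro x hx y hy t ht0 ht1
  have ht1' : 0 < 1 - t := sub_pos.2 ht1
  have hbot : ∀ z : EReal, z < ⊤ → Ψ ⊥ ≤ Ψ z := fun z hz => hmono (mem_Iio.2 bot_lt_top) hz bot_le
  induction x with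
  | top => exact absurd hx (lt_irrefl _)
  | bot =>
    rw [EReal.coe_mul_bot_of_pos ht0, EReal.bot_add]
    exact le_weighted_add_of_le ht0.le ht1'.le (add_sub_cancel _ _) (hbot y hy)
  | coe x =>
    induction y with
    | top => exact absurd hy (lt_irrefl _)
    | bot =>
      rw [EReal.coe_mul_bot_of_pos ht1', EReal.add_bot, add_comm]
      exact le_weighted_add_of_le ht1'.le ht0.le (sub_add_cancel _ _) (hbot x hx)
    | coe y =>
      have := hconv.2 (mem_univ x) (mem_univ y) ht0.le ht1'.le (add_sub_cancel t 1)
      simp only [← hψ, ← EReal.coe_mul, ← EReal.coe_add]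
      exact EReal.coe_le_coe_iff.2 this

section TwoStep

/-- The step function with value `k` on `S`, `e` on `T` and `0` elsewhere, for disjoint `S` and
`T`. Two of them sharing only the plateau `S` serve as test densities: the tail `T` fixes the mass
and the power integral without contributing to the cross integral. -/
noncomputable def twoStep {X : Type*} (S T : Set X) (k e : ℝ≥0∞) (x : X) : ℝ≥0∞ :=
  S.indicator (fun _ => k) x + T.indicator (fun _ => e) x

variable {X : Type*} {S T T' : Set X} {r : ℝ}

lemma twoStep_rpow (hST : Disjoint S T) (hr : 0 < r) (k e : ℝ≥0∞) (x : X) :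
    twoStep S T k e x ^ r = twoStep S T (k ^ r) (e ^ r) x := by
  by_cases hxS : x ∈ S
  · simp [twoStep, hxS, disjoint_left.1 hST hxS]
  · by_cases hxT : x ∈ T <;> simp [twoStep, hxS, hxT, hr]

lemma twoStep_mul_twoStep (hST : Disjoint S T) (hST' : Disjoint S T') (hTT' : Disjoint T T')
    (k e l e' : ℝ≥0∞) (x : X) :
    twoStep S T k e x * twoStep S T' l e' x = S.indicator (fun _ => k * l) x := by
  by_cases hxS : x ∈ S
  · simp [twoStep, hxS, disjoint_left.1 hST hxS, disjoint_left.1 hST' hxS]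
  · by_cases hxT : x ∈ T
    · simp [twoStep, hxS, disjoint_left.1 hTT' hxT]
    · simp [twoStep, hxS, hxT]

variable [MeasurableSpace X]

lemma measurable_twoStep (hS : MeasurableSet S) (hT : MeasurableSet T) (k e : ℝ≥0∞) :
    Measurable (twoStep S T k e) :=
  (measurable_const.indicator hS).add (measurable_const.indicator hT)

lemma lintegral_twoStep {μ : Measure X} (hS : MeasurableSet S) (hT : MeasurableSet T)
    (k e : ℝ≥0∞) : ∫⁻ x, twoStep S T k e x ∂μ = k * μ S + e * μ T := by
  simp only [twoStep]
  rw [lintegral_add_left (measurable_const.indicator hS), lintegral_indicator_const hS,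
    lintegral_indicator_const hT]

lemma lintegral_twoStep_rpow_mul_twoStep {μ : Measure X} (hS : MeasurableSet S)
    (hST : Disjoint S T) (hST' : Disjoint S T') (hTT' : Disjoint T T') (hr : 0 < r)
    (k e l e' : ℝ≥0∞) :
    ∫⁻ x, twoStep S T k e x ^ r * twoStep S T' l e' x ∂μ = k ^ r * l * μ S := by
  simp_rw [twoStep_rpow hST hr, twoStep_mul_twoStep hST hST' hTT']
  rw [lintegral_indicator_const hS]

end TwoStep

section TestDensities

variable {α : ℝ} {A B C : ℝ≥0∞}

/-- The height is `e = (P / m) ^ (1 / α)` and the width `L = m / e`. -/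
lemma exists_height_width (hα : 0 < α) {m P : ℝ≥0∞} (hm0 : m ≠ 0) (hmt : m ≠ ⊤) (hP0 : P ≠ 0)
    (hPt : P ≠ ⊤) : ∃ e L : ℝ≥0∞, L ≠ ⊤ ∧ e * L = m ∧ e ^ (α + 1) * L = P := by
  have he0 : (P / m) ^ α⁻¹ ≠ 0 := by simp [hP0, hmt, hα.le]
  have het : (P / m) ^ α⁻¹ ≠ ⊤ :=
    ENNReal.rpow_ne_top_of_nonneg (inv_nonneg.2 hα.le) (ENNReal.div_ne_top hPt hm0)
  have hmass : (P / m) ^ α⁻¹ * (m / (P / m) ^ α⁻¹) = m := ENNReal.mul_div_cancel he0 het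
  refine ⟨(P / m) ^ α⁻¹, m / (P / m) ^ α⁻¹, ENNReal.div_ne_top hmt he0, hmass, ?_⟩
  rw [ENNReal.rpow_add_of_nonneg _ _ hα.le zero_le_one, ENNReal.rpow_one, mul_assoc, hmass,
    ENNReal.rpow_inv_rpow hα.ne', ENNReal.div_mul_cancel hm0 hmt]

lemma exists_isDensity_twoStep {μ : Measure ℝ} {S : Set ℝ} {k : ℝ≥0∞} (hα : 0 < α)
    (hS : MeasurableSet S) (hmass : k * μ S < 1) (hpow : k ^ (α + 1) * μ S < A) (hA : A ≠ ⊤) :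
    ∃ e L : ℝ≥0∞, L ≠ ⊤ ∧ ∀ T, MeasurableSet T → Disjoint S T → μ T = L →
      IsDensity μ α (twoStep S T k e) ∧ ∫⁻ x, twoStep S T k e x ^ (α + 1) ∂μ = A := by
  obtain ⟨e, L, hL, heL, heL'⟩ := exists_height_width hα (tsub_pos_of_lt hmass).ne'
    (ENNReal.sub_ne_top ENNReal.one_ne_top) (tsub_pos_of_lt hpow).ne' (ENNReal.sub_ne_top hA)
  refine ⟨e, L, hL, fun T hT hST hTL => ?_⟩
  have hpowA : ∫⁻ x, twoStep S T k e x ^ (α + 1) ∂μ = A := by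
    simp_rw [twoStep_rpow hST (show 0 < α + 1 by positivity)]
    rw [lintegral_twoStep hS hT, hTL, heL', add_tsub_cancel_of_le hpow.le]
  refine ⟨⟨measurable_twoStep hS hT k e, ?_, ?_⟩, hpowA⟩
  · rw [lintegral_twoStep hS hT, hTL, heL, add_tsub_cancel_of_le hmass.le]
  · rw [add_comm, hpowA]
    exact hA.lt_top

lemma exists_pos_mul_rpow_lt_one {M N : ℝ≥0∞} {t : ℝ} (hM : M ≠ ⊤) (hN : N ≠ ⊤) (ht : 0 < t) :
    ∃ δ : ℝ≥0∞, δ ≠ 0 ∧ δ ≠ ⊤ ∧ M * δ ^ t < 1 ∧ N * δ ^ t < 1 := by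
  have hsmall : ∀ {K : ℝ≥0∞}, K ≠ ⊤ → ∀ᶠ δ in nhdsWithin (0 : ℝ≥0∞) (Ioi 0), K * δ ^ t < 1 := by
    intro K hK
    have hlim : Filter.Tendsto (fun δ : ℝ≥0∞ => K * δ ^ t) (nhds 0) (nhds 0) := by
      simpa [ht] using ENNReal.Tendsto.const_mul
        ((ENNReal.continuous_rpow_const (y := t)).tendsto 0) (.inr hK)
    exact (hlim.mono_left nhdsWithin_le_nhds).eventually_lt_const one_pos
  obtain ⟨δ, hMδ, hNδ, hδ0, hδt⟩ := ((hsmall hM).and ((hsmall hN).and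
    (Ioo_mem_nhdsGT ENNReal.zero_lt_top))).exists
  exact ⟨δ, hδ0.ne', hδt.ne, hMδ, hNδ⟩

lemma mul_inv_rpow_one_sub_mul {P δ : ℝ≥0∞} {w : ℝ} (hw0 : 0 ≤ w) (hw1 : w ≤ 1) (hδ0 : δ ≠ 0)
    (hδt : δ ≠ ⊤) : (P * δ⁻¹) ^ (1 - w) * δ = P ^ (1 - w) * δ ^ w := by
  have hw1' : 0 ≤ 1 - w := sub_nonneg.2 hw1
  calc (P * δ⁻¹) ^ (1 - w) * δ
      = P ^ (1 - w) * ((δ ^ (1 - w))⁻¹ * δ ^ (1 - w) * δ ^ w) := by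
        rw [ENNReal.mul_rpow_of_nonneg _ _ hw1', ENNReal.inv_rpow, mul_assoc _ _ (δ ^ w),
          ← ENNReal.rpow_add_of_nonneg _ _ hw1' hw0, sub_add_cancel, ENNReal.rpow_one, mul_assoc]
    _ = P ^ (1 - w) * δ ^ w := by
        rw [ENNReal.inv_mul_cancel (by simp [hδ0, hδt]) (ENNReal.rpow_ne_top_of_nonneg hw1' hδt),
          one_mul]

lemma mul_rpow_mul_mul_rpow_one_sub {κ : ℝ≥0∞} {w : ℝ} (hw0 : 0 ≤ w) (hw1 : w ≤ 1) :
    (κ * A) ^ w * (κ * B) ^ (1 - w) = κ * (A ^ w * B ^ (1 - w)) := by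
  have hw1' : 0 ≤ 1 - w := sub_nonneg.2 hw1
  rw [ENNReal.mul_rpow_of_nonneg _ _ hw0, ENNReal.mul_rpow_of_nonneg _ _ hw1', mul_mul_mul_comm,
    ← ENNReal.rpow_add_of_nonneg _ _ hw0 hw1', add_sub_cancel, ENNReal.rpow_one]

/-- Writing `C = θ * A ^ w * B ^ (1 - w)` with `θ < 1`, a plateau of width `δ` and heights
`(θ * A / δ) ^ (1 / (α + 1))`, `(θ * B / δ) ^ (1 / (α + 1))` has power integrals `θ * A`, `θ * B`
and cross integral `C`, and its masses vanish as `δ → 0`. -/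
lemma exists_plateau (hα : 0 < α) (hA : A ≠ ⊤) (hB : B ≠ ⊤)
    (hC : C < A ^ holderWeight α * B ^ (1 - holderWeight α)) :
    ∃ k l δ : ℝ≥0∞, δ ≠ ⊤ ∧ k * δ < 1 ∧ l * δ < 1 ∧ k ^ (α + 1) * δ < A ∧ l ^ (α + 1) * δ < B ∧
      k ^ α * l * δ = C := by
  have hw0 := holderWeight_pos hα
  have hw1 := one_sub_holderWeight_pos hα
  have hw : (1 - holderWeight α) * (α + 1) = 1 := by
    rw [mul_comm, add_one_mul_one_sub_holderWeight hα]
  have hwα : (1 - holderWeight α) * α = holderWeight α := by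
    linear_combination hw
  set w := holderWeight α
  set D := A ^ w * B ^ (1 - w) with hD
  have hD0 : D ≠ 0 := hC.ne_bot
  have hDt : D ≠ ⊤ := ENNReal.mul_ne_top (ENNReal.rpow_ne_top_of_nonneg hw0.le hA)
    (ENNReal.rpow_ne_top_of_nonneg hw1.le hB)
  have hA0 : A ≠ 0 := by rintro rfl; simp [hD, hw0] at hD0
  have hB0 : B ≠ 0 := by rintro rfl; simp [hD, hw1] at hD0
  obtain ⟨θ, hθ1, rfl⟩ : ∃ θ < 1, θ * D = C :=
    ⟨C / D, (ENNReal.div_lt_iff (.inl hD0) (.inl hDt)).2 (by rwa [one_mul]),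
      ENNReal.div_mul_cancel hD0 hDt⟩
  have hθt : θ ≠ ⊤ := hθ1.ne_top
  obtain ⟨δ, hδ0, hδt, hmassA, hmassB⟩ := exists_pos_mul_rpow_lt_one (t := w)
    (ENNReal.rpow_ne_top_of_nonneg hw1.le (ENNReal.mul_ne_top hθt hA))
    (ENNReal.rpow_ne_top_of_nonneg hw1.le (ENNReal.mul_ne_top hθt hB)) hw0
  have hpow : ∀ {P : ℝ≥0∞}, P ≠ 0 → P ≠ ⊤ →
      ((θ * P * δ⁻¹) ^ (1 - w)) ^ (α + 1) * δ < P := fun {P} hP0 hPt => by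
    rw [← ENNReal.rpow_mul, hw, ENNReal.rpow_one, mul_assoc, ENNReal.inv_mul_cancel hδ0 hδt,
      mul_one]
    simpa only [one_mul] using ENNReal.mul_lt_mul_left hP0 hPt hθ1
  refine ⟨(θ * A * δ⁻¹) ^ (1 - w), (θ * B * δ⁻¹) ^ (1 - w), δ, hδt, ?_, ?_, hpow hA0 hA,
    hpow hB0 hB, ?_⟩
  · rwa [mul_inv_rpow_one_sub_mul hw0.le (sub_pos.1 hw1).le hδ0 hδt]
  · rwa [mul_inv_rpow_one_sub_mul hw0.le (sub_pos.1 hw1).le hδ0 hδt]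
  · rw [← ENNReal.rpow_mul, hwα, mul_right_comm θ A, mul_right_comm θ B,
      mul_rpow_mul_mul_rpow_one_sub hw0.le (sub_pos.1 hw1).le, mul_right_comm, mul_assoc θ,
      ENNReal.inv_mul_cancel hδ0 hδt, mul_one]

lemma exists_isDensity_pair (hα : 0 < α) (hA : A ≠ ⊤) (hB : B ≠ ⊤)
    (hC : C < A ^ holderWeight α * B ^ (1 - holderWeight α)) :
    ∃ f g : ℝ → ℝ≥0∞, IsDensity volume α f ∧ IsDensity volume α g ∧
      ∫⁻ x, f x ^ (α + 1) = A ∧ ∫⁻ x, g x ^ (α + 1) = B ∧ ∫⁻ x, f x ^ α * g x = C := by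
  obtain ⟨k, l, δ, hδ, hkδ, hlδ, hkA, hlB, hklC⟩ := exists_plateau hα hA hB hC
  have hvol : volume (Ico 0 δ.toReal) = δ := by simp [hδ]
  obtain ⟨e, L, hL, hf⟩ := exists_isDensity_twoStep (μ := volume) (k := k) hα
    (measurableSet_Ico (a := 0) (b := δ.toReal)) (by rwa [hvol]) (by rwa [hvol]) hA
  obtain ⟨e', L', hL', hg⟩ := exists_isDensity_twoStep (μ := volume) (k := l) hα
    (measurableSet_Ico (a := 0) (b := δ.toReal)) (by rwa [hvol]) (by rwa [hvol]) hB
  have hST : Disjoint (Ico 0 δ.toReal) (Ico δ.toReal (δ.toReal + L.toReal)) :=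
    Ico_disjoint_Ico_same
  have hST' : Disjoint (Ico 0 δ.toReal) (Ico (-L'.toReal) 0) := Ico_disjoint_Ico_same.symm
  have hTT' : Disjoint (Ico δ.toReal (δ.toReal + L.toReal)) (Ico (-L'.toReal) 0) :=
    disjoint_left.2 fun x hx hx' => by linarith [hx.1, hx'.2, δ.toReal_nonneg]
  obtain ⟨hfd, hfA⟩ := hf _ measurableSet_Ico hST (by simp [hL])
  obtain ⟨hgd, hgB⟩ := hg _ measurableSet_Ico hST' (by simp [hL'])
  refine ⟨_, _, hfd, hgd, hfA, hgB, ?_⟩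
  rw [lintegral_twoStep_rpow_mul_twoStep measurableSet_Ico hST hST' hTT' hα, hvol, hklC]

end TestDensities

namespace IsValidDivergence

variable {α : ℝ} {φ : ℝ≥0∞ → EReal}

lemma ne_top_and_ne_bot_of_isDensity {μ : Measure ℝ} {f : ℝ → ℝ≥0∞} (h : IsValidDivergence φ α μ)
    (hα : 0 < α) (hf : IsDensity μ α f) :
    φ (∫⁻ x, f x ^ (α + 1) ∂μ) ≠ ⊤ ∧ φ (∫⁻ x, f x ^ (α + 1) ∂μ) ≠ ⊥ := by
  have hzero := (h f f hf hf).2.2 (ae_eq_refl f)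
  rw [FDPD, lintegral_rpow_mul_of_ae_eq hα.le (ae_eq_refl f)] at hzero
  refine ⟨fun htop => ?_, fun hbot => ?_⟩
  · rw [htop, EReal.coe_mul_top_of_pos (by positivity), EReal.sub_top, EReal.bot_add] at hzero
    exact EReal.bot_ne_zero hzero
  · rw [hbot, EReal.bot_sub, EReal.bot_add] at hzero
    exact EReal.bot_ne_zero hzero

lemma ne_top_and_ne_bot (h : IsValidDivergence φ α volume) (hα : 0 < α) (x : ℝ) :
    φ (EReal.exp (x : EReal)) ≠ ⊤ ∧ φ (EReal.exp (x : EReal)) ≠ ⊥ := by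
  have hpos : 0 < EReal.exp x ^ holderWeight α * EReal.exp x ^ (1 - holderWeight α) := by
    rw [exp_rpow_mul_exp_rpow]
    exact EReal.zero_lt_exp_iff.2 (EReal.bot_lt_coe _)
  obtain ⟨f, -, hf, -, hfx, -⟩ := exists_isDensity_pair hα (by simp) (by simp) hpos
  exact hfx ▸ h.ne_top_and_ne_bot_of_isDensity hα hf

lemma lt_of_lt_weighted (h : IsValidDivergence φ α volume) (hα : 0 < α) {a b p r : ℝ} {c : EReal}
    (hp : p = φ (EReal.exp a)) (hr : r = φ (EReal.exp b))
    (hc : c < ((holderWeight α * a + (1 - holderWeight α) * b : ℝ) : EReal)) :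
    φ (EReal.exp c) < ((holderWeight α * p + (1 - holderWeight α) * r : ℝ) : EReal) := by
  rw [← EReal.exp_lt_exp_iff, ← exp_rpow_mul_exp_rpow] at hc
  obtain ⟨f, g, hf, hg, hfa, hgb, hcross⟩ := exists_isDensity_pair hα (by simp) (by simp) hc
  obtain ⟨hnonneg, hzero⟩ := h f g hf hg
  rw [← hfa] at hp
  rw [← hgb] at hr
  rw [FDPD.nonneg_iff hα hp.symm hr.symm, hcross] at hnonneg
  rw [FDPD.eq_zero_iff hα hp.symm hr.symm, hcross, ← hf.lintegral_rpow_mul_eq_iff hα hg, hcross,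
    hfa, hgb] at hzero
  exact hnonneg.lt_of_ne fun heq => hc.ne (hzero.1 heq)

theorem strictMonoOn (h : IsValidDivergence φ α volume) (hα : 0 < α) :
    StrictMonoOn (fun x => φ (EReal.exp x)) (Iio (⊤ : EReal)) := by
  intro x _ y hy hxy
  lift y to ℝ using ⟨(mem_Iio.1 hy).ne, hxy.ne_bot⟩
  obtain ⟨p, hp⟩ : ∃ p : ℝ, p = φ (EReal.exp y) := CanLift.prf _ (h.ne_top_and_ne_bot hα y)
  have hmean : ∀ z : ℝ, holderWeight α * z + (1 - holderWeight α) * z = z := fun z => by ring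
  simpa only [hmean, hp] using h.lt_of_lt_weighted hα hp hp (c := x) (by rwa [hmean])

theorem eRealConvexOn (h : IsValidDivergence φ α volume) (hα : 0 < α) :
    ERealConvexOn fun x => φ (EReal.exp x) := by
  choose ψ hψ using fun x : ℝ => (CanLift.prf _ (h.ne_top_and_ne_bot hα x) :
    ∃ p : ℝ, p = φ (EReal.exp x))
  have hweight : holderWeight α ∈ subconvexWeights ψ := fun a b c hc => by
    have := h.lt_of_lt_weighted hα (hψ a) (hψ b) (EReal.coe_lt_coe_iff.2 hc)
    rw [← hψ c] at this
    exact (EReal.coe_lt_coe_iff.1 this).le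
  exact .of_convexOn (h.strictMonoOn hα).monotoneOn hψ (convexOn_of_mem_subconvexWeights
    (holderWeight_pos hα) (sub_pos.1 (one_sub_holderWeight_pos hα)) hweight)

end IsValidDivergence

/-- characterization of the FDPD class. For fixed `α > 0`, `FDPD_{φ,α}` is a
valid divergence on Lebesgue probability densities in `L_{μ,α}` if and only if
`ψ(x) = φ(eˣ)` is convex and strictly increasing on `[-∞,∞)` with `ψ(ℝ) ⊆ ℝ`. -/
theorem fdpd_characterization
    (α : ℝ) (hα : 0 < α) (φ : ℝ≥0∞ → EReal) :
    IsValidDivergence φ α volume ↔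
      (StrictMonoOn (fun x => φ (EReal.exp x)) (Iio (⊤ : EReal)) ∧
        ERealConvexOn (fun x => φ (EReal.exp x)) ∧
        ∀ x : ℝ, φ (EReal.exp (x : EReal)) ≠ ⊤ ∧ φ (EReal.exp (x : EReal)) ≠ ⊥) :=
  ⟨fun h => ⟨h.strictMonoOn hα, h.eRealConvexOn hα, h.ne_top_and_ne_bot hα⟩,
    fun ⟨hmono, hconv, hfin⟩ => isValidDivergence_of_strictMonoOn_of_convexOn hα hmono hconv hfin⟩
end

section
/- For α > 0 and probability densities f, g with finite (1+α)-th power integrals, the density power divergence DPD_α(g,f) := ∫ f^{α+1} − (1+1/α) ∫ f^α g + (1/α) ∫ g^{α+1} is nonnegative, with equality iff f = g μ-a.e. -/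
open MeasureTheory ENNReal Set

/-!
Young's inequality with the conjugate exponents `1 + 1 / α` and `α + 1`, applied to `a ^ α` and `b`
and multiplied by `1 + 1 / α`, reads
`(1 + 1 / α) * (a ^ α * b) ≤ a ^ (α + 1) + 1 / α * b ^ (α + 1)`; for finite `a` and `b`, equality
holds only if `a = b`. Integrated over `a = f x` and `b = g x`, the difference of the two sides is
`DPD_α(g, f)`; it vanishes only if the pointwise inequality is an equality almost everywhere.
-/

section Young

variable {α : ℝ}

theorem holderConjugate_one_add_one_div (hα : 0 < α) :
    (1 + 1 / α).HolderConjugate (α + 1) := by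
  rw [Real.holderConjugate_iff]
  refine ⟨lt_add_of_pos_right 1 (one_div_pos.2 hα), ?_⟩
  field_simp

theorem rpow_rpow_one_add_one_div (hα : α ≠ 0) (a : ℝ≥0∞) :
    (a ^ α) ^ (1 + 1 / α) = a ^ (α + 1) := by
  rw [← ENNReal.rpow_mul, mul_add, mul_one, mul_one_div_cancel hα]

theorem ofReal_one_add_one_div_mul_young_bound (hα : 0 < α) (a b : ℝ≥0∞) :
    ENNReal.ofReal (1 + 1 / α) * ((a ^ α) ^ (1 + 1 / α) / ENNReal.ofReal (1 + 1 / α) +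
        b ^ (α + 1) / ENNReal.ofReal (α + 1)) =
      a ^ (α + 1) + ENNReal.ofReal (1 / α) * b ^ (α + 1) := by
  have coefficient : (1 + 1 / α) / (α + 1) = 1 / α := by field_simp
  have hp : 0 < 1 + 1 / α := by positivity
  rw [mul_add, ENNReal.mul_div_cancel (by simpa using hp) ofReal_ne_top,
    rpow_rpow_one_add_one_div hα.ne', ← mul_div_assoc, ENNReal.mul_div_right_comm,
    ← ENNReal.ofReal_div_of_pos (by positivity), coefficient]

theorem ofReal_mul_rpow_mul_le (hα : 0 < α) (a b : ℝ≥0∞) :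
    ENNReal.ofReal (1 + 1 / α) * (a ^ α * b) ≤
      a ^ (α + 1) + ENNReal.ofReal (1 / α) * b ^ (α + 1) := by
  rw [← ofReal_one_add_one_div_mul_young_bound hα]
  gcongr
  exact ENNReal.young_inequality _ _ (holderConjugate_one_add_one_div hα)

theorem ofReal_mul_rpow_mul_eq_iff (hα : 0 < α) {a b : ℝ≥0∞} (ha : a ≠ ⊤) (hb : b ≠ ⊤) :
    ENNReal.ofReal (1 + 1 / α) * (a ^ α * b) =
      a ^ (α + 1) + ENNReal.ofReal (1 / α) * b ^ (α + 1) ↔ a = b := by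
  have hp : 0 < 1 + 1 / α := by positivity
  have haα : a ^ α ≠ ⊤ := ENNReal.rpow_ne_top_of_nonneg hα.le ha
  have rpow_inj : a ^ (α + 1) = b ^ (α + 1) ↔ a = b :=
    (ENNReal.rpow_left_injective (by positivity)).eq_iff
  rw [← ofReal_one_add_one_div_mul_young_bound hα,
    ENNReal.mul_right_inj (by simpa using hp) ofReal_ne_top,
    ENNReal.young_inequality_eq_iff _ _ (holderConjugate_one_add_one_div hα),
    rpow_rpow_one_add_one_div hα.ne', rpow_inj]
  simp only [haα, hb, false_and, and_false, false_or]

end Young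

section Integral

variable {X : Type*} [MeasurableSpace X] {μ : Measure X} {α : ℝ} {f g : X → ℝ≥0∞}

theorem ae_ne_top_of_lintegral_rpow_ne_top {p : ℝ} (hp : 0 < p) (hf : AEMeasurable f μ)
    (hfp : ∫⁻ x, f x ^ p ∂μ ≠ ⊤) : ∀ᵐ x ∂μ, f x ≠ ⊤ := by
  filter_upwards [ae_lt_top' (hf.pow_const p) hfp] with x hx
  exact ((ENNReal.rpow_lt_top_iff_of_pos hp).1 hx).ne

theorem lintegral_add_const_mul {c : ℝ≥0∞} (hc : c ≠ ⊤) (hf : AEMeasurable f μ)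
    (g : X → ℝ≥0∞) :
    ∫⁻ x, (f x + c * g x) ∂μ = ∫⁻ x, f x ∂μ + c * ∫⁻ x, g x ∂μ := by
  rw [lintegral_add_left' hf, lintegral_const_mul' _ _ hc]

theorem ofReal_mul_lintegral_rpow_mul_le (hα : 0 < α) (hf : AEMeasurable f μ) :
    ENNReal.ofReal (1 + 1 / α) * ∫⁻ x, f x ^ α * g x ∂μ ≤
      ∫⁻ x, f x ^ (α + 1) ∂μ + ENNReal.ofReal (1 / α) * ∫⁻ x, g x ^ (α + 1) ∂μ := by
  rw [← lintegral_const_mul' _ _ ofReal_ne_top,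
    ← lintegral_add_const_mul ofReal_ne_top (hf.pow_const _)]
  exact lintegral_mono fun x => ofReal_mul_rpow_mul_le hα (f x) (g x)

theorem ofReal_mul_lintegral_rpow_mul_eq_iff (hα : 0 < α)
    (hf : AEMeasurable f μ) (hg : AEMeasurable g μ)
    (hfi : ∫⁻ x, f x ^ (α + 1) ∂μ ≠ ⊤) (hgi : ∫⁻ x, g x ^ (α + 1) ∂μ ≠ ⊤) :
    ENNReal.ofReal (1 + 1 / α) * ∫⁻ x, f x ^ α * g x ∂μ =
      ∫⁻ x, f x ^ (α + 1) ∂μ + ENNReal.ofReal (1 / α) * ∫⁻ x, g x ^ (α + 1) ∂μ ↔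
    f =ᵐ[μ] g := by
  have pointwise : ∀ᵐ x ∂μ, ENNReal.ofReal (1 + 1 / α) * (f x ^ α * g x) =
      f x ^ (α + 1) + ENNReal.ofReal (1 / α) * g x ^ (α + 1) ↔ f x = g x := by
    have hα1 : 0 < α + 1 := by positivity
    filter_upwards [ae_ne_top_of_lintegral_rpow_ne_top hα1 hf hfi,
      ae_ne_top_of_lintegral_rpow_ne_top hα1 hg hgi] with x hfx hgx
    exact ofReal_mul_rpow_mul_eq_iff hα hfx hgx
  have lhs_ne_top : ENNReal.ofReal (1 + 1 / α) * ∫⁻ x, f x ^ α * g x ∂μ ≠ ⊤ :=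
    ne_top_of_le_ne_top (by finiteness) (ofReal_mul_lintegral_rpow_mul_le hα hf)
  rw [← lintegral_const_mul' _ _ ofReal_ne_top] at lhs_ne_top ⊢
  rw [← lintegral_add_const_mul ofReal_ne_top (hf.pow_const _)]
  refine Iff.trans ⟨fun h => ?_, lintegral_congr_ae⟩ (Filter.eventually_congr pointwise)
  exact ae_eq_of_ae_le_of_lintegral_le (ae_of_all μ fun x => ofReal_mul_rpow_mul_le hα _ _)
    lhs_ne_top (by fun_prop) h.ge

end Integral

theorem ereal_sub_eq_zero_iff {x y : EReal} (h_top : x ≠ ⊤) (h_bot : x ≠ ⊥) :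
    x - y = 0 ↔ x = y := by
  refine ⟨fun h => ?_, fun h => h ▸ EReal.sub_self h_top h_bot⟩
  refine le_antisymm ?_ ((EReal.sub_nonneg (.inl h_top) (.inl h_bot)).1 h.ge)
  exact not_lt.1 fun hlt => (EReal.sub_pos.2 hlt).ne' h

section Divergence

variable {X : Type*} [MeasurableSpace X]

/-- The density power divergence `DPD_α(g, f)` on an arbitrary measure space. It takes values in
`EReal`, where `⊤ - ⊤ = ⊥`, so it is meaningful only for functions with finite `(α + 1)`-th power
integral. For `X = ℝ` it is definitionally `FDPD` with `φ` the coercion to `EReal`. -/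
noncomputable def densityPowerDivergence (α : ℝ) (μ : Measure X) (g f : X → ℝ≥0∞) : EReal :=
  (∫⁻ x, f x ^ (α + 1) ∂μ : ℝ≥0∞)
    - ((1 + 1 / α : ℝ) : EReal) * (∫⁻ x, f x ^ α * g x ∂μ : ℝ≥0∞)
    + ((1 / α : ℝ) : EReal) * (∫⁻ x, g x ^ (α + 1) ∂μ : ℝ≥0∞)

variable {μ : Measure X} {α : ℝ} {f g : X → ℝ≥0∞}

theorem densityPowerDivergence_eq_sub (hα : 0 < α) (g f : X → ℝ≥0∞) :
    densityPowerDivergence α μ g f =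
      ((∫⁻ x, f x ^ (α + 1) ∂μ + ENNReal.ofReal (1 / α) * ∫⁻ x, g x ^ (α + 1) ∂μ : ℝ≥0∞) : EReal)
        - (ENNReal.ofReal (1 + 1 / α) * ∫⁻ x, f x ^ α * g x ∂μ : ℝ≥0∞) := by
  have hp : 0 ≤ 1 + 1 / α := by positivity
  have hc : 0 ≤ 1 / α := by positivity
  simp only [densityPowerDivergence, EReal.coe_ennreal_add, EReal.coe_ennreal_mul,
    EReal.coe_ennreal_ofReal, max_eq_left hp, max_eq_left hc, sub_eq_add_neg, add_right_comm]

theorem dpd_nonneg_and_eq_zero_iff_general (hα : 0 < α)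
    (hf : AEMeasurable f μ) (hg : AEMeasurable g μ)
    (hfi : ∫⁻ x, f x ^ (α + 1) ∂μ ≠ ⊤) (hgi : ∫⁻ x, g x ^ (α + 1) ∂μ ≠ ⊤) :
    0 ≤ densityPowerDivergence α μ g f ∧
      (densityPowerDivergence α μ g f = 0 ↔ f =ᵐ[μ] g) := by
  have sum_ne_top : ((∫⁻ x, f x ^ (α + 1) ∂μ +
      ENNReal.ofReal (1 / α) * ∫⁻ x, g x ^ (α + 1) ∂μ : ℝ≥0∞) : EReal) ≠ ⊤ :=
    EReal.coe_ennreal_eq_top_iff.not.2 (by finiteness)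
  have sum_ne_bot := EReal.coe_ennreal_ne_bot
    (∫⁻ x, f x ^ (α + 1) ∂μ + ENNReal.ofReal (1 / α) * ∫⁻ x, g x ^ (α + 1) ∂μ)
  rw [densityPowerDivergence_eq_sub hα, EReal.sub_nonneg (.inl sum_ne_top) (.inl sum_ne_bot),
    ereal_sub_eq_zero_iff sum_ne_top sum_ne_bot, EReal.coe_ennreal_le_coe_ennreal_iff,
    EReal.coe_ennreal_eq_coe_ennreal_iff, eq_comm]
  exact ⟨ofReal_mul_lintegral_rpow_mul_le hα hf,
    ofReal_mul_lintegral_rpow_mul_eq_iff hα hf hg hfi hgi⟩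

end Divergence

theorem IsDensity.lintegral_rpow_ne_top_s18 {μ : Measure ℝ} {α : ℝ} {f : ℝ → ℝ≥0∞}
    (hf : IsDensity μ α f) : ∫⁻ x, f x ^ (α + 1) ∂μ ≠ ⊤ :=
  add_comm 1 α ▸ hf.2.2.ne

/-- the density power divergence `DPD_α = FDPD_{id,α}`,
`DPD_α(g,f) = ∫ f^{α+1} − (1+1/α) ∫ f^α g + (1/α) ∫ g^{α+1}`, is nonnegative on densities
in `L_{μ,α}`, and vanishes iff the two densities agree `μ`-a.e. -/
theorem dpd_nonneg_and_eq_zero_iff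
    (μ : Measure ℝ) (α : ℝ) (hα : 0 < α)
    (f g : ℝ → ℝ≥0∞) (hf : IsDensity μ α f) (hg : IsDensity μ α g) :
    0 ≤ FDPD (fun t => (t : EReal)) α μ g f ∧
      (FDPD (fun t => (t : EReal)) α μ g f = 0 ↔ f =ᵐ[μ] g) :=
  dpd_nonneg_and_eq_zero_iff_general hα hf.1.aemeasurable hg.1.aemeasurable
    hf.lintegral_rpow_ne_top_s18 hg.lintegral_rpow_ne_top_s18
end
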